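/- Let k ≥ 2 be an integer and let W = (w₁, …, wₙ) be a random vector with independent coordinates each distributed as χ²(k) (chi-square with k degrees of freedom). If f : ℝ₊ⁿ → ℝ is coordinatewise non-decreasing and convex, then the map t ↦ Φ⁻¹(P(f(W) ≤ t)) is concave on the interval where it is defined. -/

import Mathlib

open MeasureTheory ProbabilityTheory Real

/-- The standard normal cumulative distribution function. -/
noncomputable def Phi (x : ℝ) : ℝ := ((gaussianReal 0 1) (Set.Iic x)).toReal

/-- The (generalized) inverse of the standard normal CDF. -/
noncomputable def PhiInv (p : ℝ) : ℝ := sInf {x | p ≤ Phi x}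

/-- The chi-square distribution with `k` degrees of freedom, realized as the law of the
sum of squares of `k` independent standard Gaussians. -/
noncomputable def chiSq (k : ℕ) : Measure ℝ :=
  Measure.map (fun x : Fin k → ℝ => ∑ i, (x i) ^ 2) (Measure.pi fun _ => gaussianReal 0 1)

/-
Ehrhard's inequality is proved by Borell's argument. If `∂ᵣU = r ∂ₓₓU` is the heat flow of
`Φ ∘ u`, then `V = Φ⁻¹(U)` solves `∂ᵣV = r (∂ₓₓV - V (∂ₓV)²)`. For three such solutions, the
inequality `α F(x) + β G(y) ≤ H(α x + β y)` with `α + β = 1` persists along the flow: at a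
minimum over `(x, y)` of the difference of the two sides, the three space derivatives agree, so
that the nonlinear terms add up to a multiple of the difference itself, while the second-order
terms are the second derivative of the difference along the diagonal direction `(1, 1)`; hence
the maximum principle applies. At `r = 1` and `x = y = 0` the flow averages against the
Gaussian. Fubini extends this one-dimensional inequality to products, since `Φ⁻¹(∫ Φ)` of the
slices satisfies the same hypothesis, and steep cutoffs turn functions into closed sets.

A chi-square vector is the image of a Gaussian one under the sums of squares of its blocks, and
the composition `F` of a monotone convex function with these is convex on the whole space, so
its sublevel sets satisfy `α {F ≤ s} + β {F ≤ t} ⊆ {F ≤ α s + β t}`.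
-/

open Filter Topology Set
open scoped BoundedContinuousFunction ContDiff NNReal

local notation "γ" => gaussianReal 0 1

local notation "φ" => gaussianPDFReal 0 1

section GaussianDensity

lemma hasDerivAt_gaussianPDFReal (μ : ℝ) (v : ℝ≥0) (x : ℝ) :
    HasDerivAt (gaussianPDFReal μ v) (-((x - μ) / v) * gaussianPDFReal μ v x) x := by
  have hexp : HasDerivAt (fun x : ℝ => -(x - μ) ^ 2 / (2 * v)) (-((x - μ) / v)) x := by
    refine ((((hasDerivAt_id x).sub_const μ).pow 2).neg.div_const (2 * (v : ℝ))).congr_deriv ?_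
    simp [neg_div, mul_div_mul_left]
  refine (hexp.exp.const_mul _).congr_deriv ?_
  rw [gaussianPDFReal]
  ring

lemma contDiff_gaussianPDFReal (μ : ℝ) (v : ℝ≥0) {n : ℕ∞ω} :
    ContDiff ℝ n (gaussianPDFReal μ v) := by
  rw [gaussianPDFReal_def]
  fun_prop

lemma gaussianPDFReal_le_of_abs_sub_le {μ : ℝ} {v : ℝ≥0} {x y : ℝ} (h : |x - μ| ≤ |y - μ|) :
    gaussianPDFReal μ v y ≤ gaussianPDFReal μ v x := by
  simp only [gaussianPDFReal]
  have : (x - μ) ^ 2 ≤ (y - μ) ^ 2 := sq_le_sq.2 h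
  gcongr

lemma gaussianPDFReal_zero_one_le_one (x : ℝ) : φ x ≤ 1 := by
  have hcoef : (√(2 * π))⁻¹ ≤ 1 :=
    inv_le_one_of_one_le₀ (Real.one_le_sqrt.2 (by linarith [Real.pi_gt_three]))
  have hexp : rexp (-x ^ 2 / 2) ≤ 1 := Real.exp_le_one_iff.2 (by linarith [sq_nonneg x])
  simpa [gaussianPDFReal] using mul_le_one₀ hcoef (exp_pos _).le hexp

lemma integrable_gaussianReal_iff {μ : ℝ} {v : ℝ≥0} (hv : v ≠ 0) {g : ℝ → ℝ} :
    Integrable g (gaussianReal μ v) ↔ Integrable (fun x => g x * gaussianPDFReal μ v x) := by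
  rw [gaussianReal_of_var_ne_zero μ hv, integrable_withDensity_iff
    (measurable_gaussianPDF μ v) (ae_of_all _ fun _ => gaussianPDF_lt_top)]
  simp only [toReal_gaussianPDF]

lemma integral_sub_mul_gaussianReal {μ : ℝ} {v : ℝ≥0} (hv : v ≠ 0) {g : ℝ → ℝ}
    (hg : Differentiable ℝ g) (hint : Integrable g (gaussianReal μ v))
    (hint_mul : Integrable (fun x => (x - μ) * g x) (gaussianReal μ v))
    (hint_deriv : Integrable (deriv g) (gaussianReal μ v)) :
    ∫ x, (x - μ) * g x ∂(gaussianReal μ v) = v * ∫ x, deriv g x ∂(gaussianReal μ v) := by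
  have hv' : (v : ℝ) ≠ 0 := NNReal.coe_ne_zero.2 hv
  rw [integrable_gaussianReal_iff hv] at hint hint_mul hint_deriv
  have hparts := integral_mul_deriv_eq_deriv_mul_of_integrable
    (fun x _ => (hg x).hasDerivAt) (fun x _ => hasDerivAt_gaussianPDFReal μ v x)
    ((hint_mul.const_mul (-(v : ℝ)⁻¹)).congr
      (ae_of_all _ fun x => by simp only [Pi.mul_apply]; ring))
    hint_deriv hint
  simp only [integral_gaussianReal_eq_integral_smul hv, smul_eq_mul]
  calc ∫ x, gaussianPDFReal μ v x * ((x - μ) * g x)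
      = -v * ∫ x, g x * (-((x - μ) / v) * gaussianPDFReal μ v x) := by
        rw [← integral_const_mul]
        congr 1 with x
        field_simp
    _ = v * ∫ x, deriv g x * gaussianPDFReal μ v x := by rw [hparts]; ring
    _ = v * ∫ x, gaussianPDFReal μ v x * deriv g x := by simp only [mul_comm]

end GaussianDensity

section NormalCDF

lemma Phi_eq_cdf : Phi = cdf γ := by
  funext x
  rw [cdf_eq_real, Phi, Measure.real]

lemma hasDerivAt_Phi (x : ℝ) : HasDerivAt Phi (φ x) x := by
  have hφ : Continuous φ := (contDiff_gaussianPDFReal 0 1 (n := 0)).continuous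
  have hint : Integrable φ := integrable_gaussianPDFReal 0 1
  have hPhi (y : ℝ) : Phi y = ∫ t in Iic y, φ t := by
    rw [Phi, gaussianReal_apply_eq_integral 0 one_ne_zero, ENNReal.toReal_ofReal]
    exact integral_nonneg fun t => gaussianPDFReal_nonneg 0 1 t
  have hFTC (y : ℝ) : Phi y = Phi 0 + ∫ t in (0 : ℝ)..y, φ t := by
    rw [← intervalIntegral.integral_Iic_sub_Iic hint.integrableOn hint.integrableOn, ← hPhi,
      ← hPhi, add_sub_cancel]
  rw [funext hFTC]
  exact (hφ.integral_hasStrictDerivAt 0 x).hasDerivAt.const_add _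

lemma deriv_Phi : deriv Phi = φ :=
  funext fun x => (hasDerivAt_Phi x).deriv

lemma contDiff_Phi : ContDiff ℝ ∞ Phi := by
  rw [contDiff_infty_iff_deriv, deriv_Phi]
  exact ⟨fun x => (hasDerivAt_Phi x).differentiableAt, contDiff_gaussianPDFReal 0 1⟩

lemma continuous_Phi : Continuous Phi := contDiff_Phi.continuous

lemma strictMono_Phi : StrictMono Phi :=
  strictMono_of_deriv_pos fun x => by
    rw [deriv_Phi]
    exact gaussianPDFReal_pos 0 1 x one_ne_zero

lemma tendsto_Phi_atTop : Tendsto Phi atTop (𝓝 1) :=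
  Phi_eq_cdf ▸ tendsto_cdf_atTop _

lemma tendsto_Phi_atBot : Tendsto Phi atBot (𝓝 0) :=
  Phi_eq_cdf ▸ tendsto_cdf_atBot _

lemma Phi_mem_Ioo (x : ℝ) : Phi x ∈ Ioo 0 1 :=
  ⟨(Phi_eq_cdf ▸ cdf_nonneg _ _ : 0 ≤ Phi (x - 1)).trans_lt (strictMono_Phi (sub_one_lt x)),
    (strictMono_Phi (lt_add_one x)).trans_le (Phi_eq_cdf ▸ cdf_le_one _ _)⟩

lemma abs_Phi_le_one (x : ℝ) : |Phi x| ≤ 1 :=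
  (abs_of_pos (Phi_mem_Ioo x).1).trans_le (Phi_mem_Ioo x).2.le

lemma PhiInv_Phi (x : ℝ) : PhiInv (Phi x) = x := by
  simp only [PhiInv, strictMono_Phi.le_iff_le]
  exact csInf_Ici

lemma Phi_PhiInv {p : ℝ} (hp : p ∈ Ioo 0 1) : Phi (PhiInv p) = p := by
  obtain ⟨x, rfl⟩ : p ∈ range Phi :=
    mem_range_of_exists_le_of_exists_ge continuous_Phi
      (tendsto_Phi_atBot.eventually_le_const hp.1).exists
      (tendsto_Phi_atTop.eventually_const_le hp.2).exists
  rw [PhiInv_Phi]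

lemma strictMonoOn_PhiInv : StrictMonoOn PhiInv (Ioo 0 1) := fun p hp q hq hpq => by
  rwa [← strictMono_Phi.lt_iff_lt, Phi_PhiInv hp, Phi_PhiInv hq]

lemma continuousAt_PhiInv {p : ℝ} (hp : p ∈ Ioo 0 1) : ContinuousAt PhiInv p := by
  have hsurj : PhiInv '' Ioo 0 1 = univ :=
    eq_univ_of_forall fun x => ⟨Phi x, Phi_mem_Ioo x, PhiInv_Phi x⟩
  exact strictMonoOn_PhiInv.continuousAt_of_image_mem_nhds (isOpen_Ioo.mem_nhds hp)
    (hsurj ▸ univ_mem)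

lemma hasDerivAt_PhiInv {p : ℝ} (hp : p ∈ Ioo 0 1) :
    HasDerivAt PhiInv (φ (PhiInv p))⁻¹ p :=
  HasDerivAt.of_local_left_inverse (continuousAt_PhiInv hp) (hasDerivAt_Phi _)
    (gaussianPDFReal_pos 0 1 _ one_ne_zero).ne'
    (eventually_of_mem (isOpen_Ioo.mem_nhds hp) fun _ => Phi_PhiInv)

end NormalCDF

section PhiMean

variable {Ω : Type*} [MeasurableSpace Ω] {μ : Measure Ω} [IsProbabilityMeasure μ]

/-- The quasi-arithmetic mean `Φ⁻¹(∫ Φ(u) dμ)` of `u`, in terms of which Ehrhard's inequality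
is a concavity statement. -/
noncomputable def PhiMean (μ : Measure Ω) (u : Ω → ℝ) : ℝ := PhiInv (∫ z, Phi (u z) ∂μ)

lemma integrable_Phi_comp {u : Ω → ℝ} (hu : AEStronglyMeasurable u μ) :
    Integrable (fun z => Phi (u z)) μ :=
  .of_bound (continuous_Phi.comp_aestronglyMeasurable hu) 1 (ae_of_all _ fun _ => abs_Phi_le_one _)

lemma integral_Phi_comp_mem_Ioo {u : Ω → ℝ} (hu : AEStronglyMeasurable u μ) :
    ∫ z, Phi (u z) ∂μ ∈ Ioo 0 1 := by
  have hint := integrable_Phi_comp hu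
  have hpos {w : Ω → ℝ} (hw : Integrable w μ) (h : ∀ z, 0 < w z) : 0 < ∫ z, w z ∂μ := by
    rw [integral_pos_iff_support_of_nonneg (fun z => (h z).le) hw,
      Function.support_eq_univ fun z => (h z).ne']
    simp
  have hcompl := hpos ((integrable_const 1).sub hint) fun z => sub_pos.2 (Phi_mem_Ioo (u z)).2
  rw [integral_sub' (integrable_const 1) hint] at hcompl
  exact ⟨hpos hint fun z => (Phi_mem_Ioo _).1, by simpa using hcompl⟩

lemma Phi_PhiMean {u : Ω → ℝ} (hu : AEStronglyMeasurable u μ) :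
    Phi (PhiMean μ u) = ∫ z, Phi (u z) ∂μ :=
  Phi_PhiInv (integral_Phi_comp_mem_Ioo hu)

lemma abs_PhiMean_le {u : Ω → ℝ} (hu : AEStronglyMeasurable u μ) {C : ℝ} (hC : ∀ z, |u z| ≤ C) :
    |PhiMean μ u| ≤ C := by
  have hmem : Phi (PhiMean μ u) ∈ Icc (Phi (-C)) (Phi C) := by
    rw [Phi_PhiMean hu]
    exact (convex_Icc _ _).integral_mem isClosed_Icc (ae_of_all _ fun z =>
      ⟨strictMono_Phi.monotone (abs_le.1 (hC z)).1, strictMono_Phi.monotone (abs_le.1 (hC z)).2⟩)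
      (integrable_Phi_comp hu)
  exact abs_le.2 ⟨strictMono_Phi.le_iff_le.1 hmem.1, strictMono_Phi.le_iff_le.1 hmem.2⟩

lemma tendsto_integral_Phi_comp {ι : Type*} {l : Filter ι} [l.IsCountablyGenerated]
    {u : ι → Ω → ℝ} {g : Ω → ℝ} (hu : ∀ i, AEStronglyMeasurable (u i) μ)
    (hlim : ∀ z, Tendsto (fun i => Phi (u i z)) l (𝓝 (g z))) :
    Tendsto (fun i => ∫ z, Phi (u i z) ∂μ) l (𝓝 (∫ z, g z ∂μ)) :=
  tendsto_integral_filter_of_dominated_convergence 1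
    (Eventually.of_forall fun i => continuous_Phi.comp_aestronglyMeasurable (hu i))
    (Eventually.of_forall fun _ => ae_of_all _ fun _ => abs_Phi_le_one _)
    (integrable_const 1) (ae_of_all _ hlim)

lemma tendsto_PhiMean {ι : Type*} {l : Filter ι} [l.IsCountablyGenerated]
    {u : ι → Ω → ℝ} {w : Ω → ℝ} (hu : ∀ i, AEStronglyMeasurable (u i) μ)
    (hw : AEStronglyMeasurable w μ) (hlim : ∀ z, Tendsto (fun i => u i z) l (𝓝 (w z))) :
    Tendsto (fun i => PhiMean μ (u i)) l (𝓝 (PhiMean μ w)) :=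
  (continuousAt_PhiInv (integral_Phi_comp_mem_Ioo hw)).tendsto.comp
    (tendsto_integral_Phi_comp hu fun z => (continuous_Phi.tendsto _).comp (hlim z))

lemma continuous_PhiMean {X : Type*} [TopologicalSpace X] [FirstCountableTopology X]
    {u : X → Ω → ℝ} (hu : ∀ x, AEStronglyMeasurable (u x) μ)
    (hcont : ∀ z, Continuous fun x => u x z) : Continuous fun x => PhiMean μ (u x) :=
  continuous_iff_continuousAt.2 fun x =>
    tendsto_PhiMean hu (hu x) fun z => (hcont z).tendsto x

end PhiMean

section HeatFlow

variable {h u : ℝ → ℝ} {C C' : ℝ}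

lemma hasDerivAt_integral_comp_affine {Ω : Type*} [MeasurableSpace Ω] {μ : Measure Ω}
    [IsFiniteMeasure μ] {p q : Ω → ℝ} (hp : AEStronglyMeasurable p μ) (hq : Integrable q μ)
    (hh : ContDiff ℝ 1 h) (hC : ∀ x, |h x| ≤ C) (hC' : ∀ x, |deriv h x| ≤ C') (s : ℝ) :
    HasDerivAt (fun s => ∫ z, h (p z + s * q z) ∂μ)
      (∫ z, q z * deriv h (p z + s * q z) ∂μ) s := by
  have hmeas (s : ℝ) : AEStronglyMeasurable (fun z => p z + s * q z) μ :=
    hp.add (hq.aestronglyMeasurable.const_mul s)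
  have hderiv (s : ℝ) (z : Ω) :
      HasDerivAt (fun s => h (p z + s * q z)) (q z * deriv h (p z + s * q z)) s := by
    have hline : HasDerivAt (fun s => p z + s * q z) (q z) s := by
      simpa using ((hasDerivAt_id s).mul_const (q z)).const_add (p z)
    rw [mul_comm]
    exact ((hh.differentiable one_ne_zero _).hasDerivAt).comp s hline
  refine (hasDerivAt_integral_of_dominated_loc_of_deriv_le (bound := fun z => |q z| * C')
    univ_mem (Eventually.of_forall fun s => hh.continuous.comp_aestronglyMeasurable (hmeas s))
    ?_ ?_ ?_ (hq.abs.mul_const C') (ae_of_all _ fun z s _ => hderiv s z)).2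
  · exact .of_bound (hh.continuous.comp_aestronglyMeasurable (hmeas s)) C
      (ae_of_all _ fun z => hC _)
  · exact hq.aestronglyMeasurable.mul
      ((hh.continuous_deriv le_rfl).comp_aestronglyMeasurable (hmeas s))
  · refine ae_of_all _ fun z s _ => ?_
    rw [norm_mul]
    exact mul_le_mul_of_nonneg_left (hC' _) (norm_nonneg _)

/-- The heat semigroup at time `r²`: the expectation of `h (x + r Z)` for a standard Gaussian `Z`.
Parametrizing by `r` rather than by time keeps it differentiable down to `r = 0`. -/
noncomputable def heatFlow (h : ℝ → ℝ) (r x : ℝ) : ℝ := ∫ z, h (x + r * z) ∂γ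

lemma abs_heatFlow_le (hC : ∀ x, |h x| ≤ C) (r x : ℝ) : |heatFlow h r x| ≤ C := by
  simpa [heatFlow] using norm_integral_le_of_norm_le_const (μ := γ) (f := fun z => h (x + r * z))
    (C := C) (ae_of_all _ fun z => hC (x + r * z))

lemma integrable_id_gaussianReal (μ : ℝ) (v : ℝ≥0) : Integrable id (gaussianReal μ v) :=
  (memLp_id_gaussianReal 1).integrable le_rfl

lemma hasDerivAt_heatFlow (hh : ContDiff ℝ 1 h) (hC : ∀ x, |h x| ≤ C)
    (hC' : ∀ x, |deriv h x| ≤ C') (r x : ℝ) :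
    HasDerivAt (heatFlow h r) (heatFlow (deriv h) r x) x := by
  have hline := hasDerivAt_integral_comp_affine (μ := γ) (p := fun z => r * z) (q := fun _ => 1)
    (by fun_prop) (integrable_const 1) hh hC hC' x
  simp only [mul_one, one_mul, add_comm (r * _)] at hline
  exact hline

/-- A `C²` function on the line that is bounded along with its first two derivatives, the
regularity of the initial data of the heat flow. -/
structure IsBoundedC2 (u : ℝ → ℝ) (C : ℝ) : Prop where
  contDiff : ContDiff ℝ 2 u
  abs_le : ∀ x, |u x| ≤ C
  abs_deriv_le : ∀ x, |deriv u x| ≤ C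
  abs_deriv_deriv_le : ∀ x, |deriv (deriv u) x| ≤ C

namespace IsBoundedC2

lemma nonneg (hu : IsBoundedC2 u C) : 0 ≤ C := (abs_nonneg _).trans (hu.abs_le 0)

lemma contDiff_deriv (hu : IsBoundedC2 u C) : ContDiff ℝ 1 (deriv u) :=
  (contDiff_succ_iff_deriv (n := 1).1 hu.contDiff).2.2

lemma hasDerivAt (hu : IsBoundedC2 u C) (x : ℝ) : HasDerivAt u (deriv u x) x :=
  (hu.contDiff.differentiable two_ne_zero x).hasDerivAt

lemma hasDerivAt_deriv (hu : IsBoundedC2 u C) (x : ℝ) :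
    HasDerivAt (deriv u) (deriv (deriv u) x) x :=
  (hu.contDiff_deriv.differentiable one_ne_zero x).hasDerivAt

lemma Phi_comp (hu : IsBoundedC2 u C) : IsBoundedC2 (Phi ∘ u) (1 + C + C * C ^ 2) := by
  have hC := hu.nonneg
  have hφ (x : ℝ) : |φ (u x)| ≤ 1 :=
    (abs_of_nonneg (gaussianPDFReal_nonneg 0 1 _)).trans_le (gaussianPDFReal_zero_one_le_one _)
  have hderiv : deriv (Phi ∘ u) = fun x => φ (u x) * deriv u x :=
    funext fun x => ((hasDerivAt_Phi (u x)).comp x (hu.hasDerivAt x)).deriv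
  have hderiv₂ (x : ℝ) :
      deriv (deriv (Phi ∘ u)) x = φ (u x) * (deriv (deriv u) x - u x * deriv u x ^ 2) := by
    rw [hderiv]
    refine ((((hasDerivAt_gaussianPDFReal 0 1 (u x)).comp x (hu.hasDerivAt x)).mul
      (hu.hasDerivAt_deriv x)).congr_deriv ?_).deriv
    simp only [Function.comp_apply, sub_zero, NNReal.coe_one, div_one]
    ring
  refine ⟨(contDiff_Phi.of_le (by norm_cast)).comp hu.contDiff, fun x => ?_, fun x => ?_,
    fun x => ?_⟩
  · have := abs_Phi_le_one (u x)
    have : 0 ≤ C * C ^ 2 := by positivity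
    simp only [Function.comp_apply]
    linarith
  · rw [hderiv, abs_mul]
    have := mul_le_mul (hφ x) (hu.abs_deriv_le x) (abs_nonneg _) zero_le_one
    have : 0 ≤ C * C ^ 2 := by positivity
    linarith
  · rw [hderiv₂, abs_mul]
    have hfactor : |deriv (deriv u) x - u x * deriv u x ^ 2| ≤ C + C * C ^ 2 := by
      refine (abs_sub _ _).trans ?_
      rw [abs_mul, abs_pow]
      gcongr
      exacts [hu.abs_deriv_deriv_le x, hu.abs_le x, hu.abs_deriv_le x]
    have := mul_le_mul (hφ x) hfactor (abs_nonneg _) zero_le_one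
    linarith

lemma hasDerivAt_heatFlow_time (hu : IsBoundedC2 u C) (r x : ℝ) :
    HasDerivAt (fun r => heatFlow u r x) (r * heatFlow (deriv (deriv u)) r x) r := by
  have hline := hasDerivAt_integral_comp_affine (μ := γ) (p := fun _ => x) (q := id)
    aestronglyMeasurable_const (integrable_id_gaussianReal 0 1) (hu.contDiff.of_le one_le_two)
    hu.abs_le hu.abs_deriv_le r
  have hcont := hu.contDiff_deriv.continuous
  have hcont' := hu.contDiff_deriv.continuous_deriv le_rfl
  have hderiv (z : ℝ) : HasDerivAt (fun z => deriv u (x + r * z))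
      (r * deriv (deriv u) (x + r * z)) z := by
    have hinner : HasDerivAt (fun z => x + r * z) r z := by
      simpa using ((hasDerivAt_id z).const_mul r).const_add x
    rw [mul_comm]
    exact (hu.hasDerivAt_deriv (x + r * z)).comp z hinner
  have hderiv_eq : deriv (fun z => deriv u (x + r * z)) =
      fun z => r * deriv (deriv u) (x + r * z) :=
    funext fun z => (hderiv z).deriv
  have hbdd : Integrable (fun z => deriv u (x + r * z)) γ :=
    .of_bound (by fun_prop) C (ae_of_all _ fun z => hu.abs_deriv_le _)
  have hbdd' : Integrable (fun z => deriv (deriv u) (x + r * z)) γ :=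
    .of_bound (by fun_prop) C (ae_of_all _ fun z => hu.abs_deriv_deriv_le _)
  have hstein := integral_sub_mul_gaussianReal (μ := 0) one_ne_zero
    (fun z => (hderiv z).differentiableAt) hbdd ?_ (hderiv_eq ▸ hbdd'.const_mul r)
  · rw [hderiv_eq, integral_const_mul] at hstein
    simp only [sub_zero, NNReal.coe_one, one_mul] at hstein
    exact hline.congr_deriv hstein
  · simpa using (integrable_id_gaussianReal 0 1).mul_bdd (c := C) (by fun_prop)
      (ae_of_all _ fun z => hu.abs_deriv_le (x + r * z))

end IsBoundedC2

end HeatFlow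

section ProbitHeatFlow

variable {u : ℝ → ℝ} {V : ℝ → ℝ → ℝ} {C C' : ℝ}

/-- A bounded solution `V r x`, with bounded space derivative, of
`∂ᵣ V = r (∂ₓₓ V - V (∂ₓ V)²)`. This is the equation that the heat flow `∂ᵣ U = r ∂ₓₓ U`
becomes for `V = Φ⁻¹(U)`. -/
structure IsProbitHeatFlow (V : ℝ → ℝ → ℝ) (C : ℝ) : Prop where
  continuous : Continuous fun q : ℝ × ℝ => V q.1 q.2
  differentiable : ∀ r, Differentiable ℝ (V r)
  differentiable_deriv : ∀ r, Differentiable ℝ (deriv (V r))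
  hasDerivAt_time : ∀ r x,
    HasDerivAt (fun r => V r x) (r * (deriv (deriv (V r)) x - V r x * deriv (V r) x ^ 2)) r
  abs_le : ∀ r x, |V r x| ≤ C
  abs_deriv_le : ∀ r x, |deriv (V r) x| ≤ C

lemma IsProbitHeatFlow.mono (hV : IsProbitHeatFlow V C) (hC : C ≤ C') : IsProbitHeatFlow V C' where
  __ := hV
  abs_le r x := (hV.abs_le r x).trans hC
  abs_deriv_le r x := (hV.abs_deriv_le r x).trans hC

/-- The heat flow `heatFlow (Phi ∘ u) r x` transported back by `Φ⁻¹`. -/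
noncomputable def probitFlow (u : ℝ → ℝ) (r x : ℝ) : ℝ := PhiMean γ fun z => u (x + r * z)

lemma hasDerivAt_PhiInv_comp {U : ℝ → ℝ} {U' x : ℝ} (hU : HasDerivAt U U' x) (hx : U x ∈ Ioo 0 1) :
    HasDerivAt (fun x => PhiInv (U x)) ((φ (PhiInv (U x)))⁻¹ * U') x :=
  (hasDerivAt_PhiInv hx).comp x hU

namespace IsBoundedC2

lemma heatFlow_Phi_comp_mem_Ioo (hu : IsBoundedC2 u C) (r x : ℝ) :
    heatFlow (Phi ∘ u) r x ∈ Ioo 0 1 :=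
  have := hu.contDiff.continuous
  integral_Phi_comp_mem_Ioo (by fun_prop)

lemma hasDerivAt_probitFlow (hu : IsBoundedC2 u C) (r x : ℝ) :
    HasDerivAt (probitFlow u r)
      ((φ (probitFlow u r x))⁻¹ * heatFlow (deriv (Phi ∘ u)) r x) x :=
  hasDerivAt_PhiInv_comp (hasDerivAt_heatFlow (hu.Phi_comp.contDiff.of_le one_le_two)
    hu.Phi_comp.abs_le hu.Phi_comp.abs_deriv_le r x) (hu.heatFlow_Phi_comp_mem_Ioo r x)

lemma deriv_probitFlow (hu : IsBoundedC2 u C) (r : ℝ) :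
    deriv (probitFlow u r) = fun x => (φ (probitFlow u r x))⁻¹ * heatFlow (deriv (Phi ∘ u)) r x :=
  funext fun x => (hu.hasDerivAt_probitFlow r x).deriv

lemma hasDerivAt_deriv_probitFlow (hu : IsBoundedC2 u C) (r x : ℝ) :
    HasDerivAt (deriv (probitFlow u r))
      ((φ (probitFlow u r x))⁻¹ * heatFlow (deriv (deriv (Phi ∘ u))) r x +
        probitFlow u r x * deriv (probitFlow u r) x ^ 2) x := by
  have hφ : φ (probitFlow u r x) ≠ 0 := (gaussianPDFReal_pos 0 1 _ one_ne_zero).ne'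
  have hφV := (hasDerivAt_gaussianPDFReal 0 1 _).comp x (hu.hasDerivAt_probitFlow r x)
  have hUₓ := hasDerivAt_heatFlow hu.Phi_comp.contDiff_deriv hu.Phi_comp.abs_deriv_le
    hu.Phi_comp.abs_deriv_deriv_le r x
  rw [hu.deriv_probitFlow]
  refine ((hφV.inv hφ).mul hUₓ).congr_deriv ?_
  simp only [Function.comp_apply, sub_zero, NNReal.coe_one, div_one, Pi.inv_apply]
  field_simp
  ring

lemma hasDerivAt_probitFlow_time (hu : IsBoundedC2 u C) (r x : ℝ) :
    HasDerivAt (fun r => probitFlow u r x)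
      (r * (deriv (deriv (probitFlow u r)) x
        - probitFlow u r x * deriv (probitFlow u r) x ^ 2)) r := by
  refine (hasDerivAt_PhiInv_comp (hu.Phi_comp.hasDerivAt_heatFlow_time r x)
    (hu.heatFlow_Phi_comp_mem_Ioo r x)).congr_deriv ?_
  rw [(hu.hasDerivAt_deriv_probitFlow r x).deriv, add_sub_cancel_right]
  exact mul_left_comm _ _ _

lemma abs_probitFlow_le (hu : IsBoundedC2 u C) (r x : ℝ) : |probitFlow u r x| ≤ C :=
  have := hu.contDiff.continuous
  abs_PhiMean_le (by fun_prop) fun _ => hu.abs_le _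

lemma abs_deriv_probitFlow_le (hu : IsBoundedC2 u C) (r x : ℝ) :
    |deriv (probitFlow u r) x| ≤ (φ C)⁻¹ * (1 + C + C * C ^ 2) := by
  have hφC : φ C ≤ φ (probitFlow u r x) := gaussianPDFReal_le_of_abs_sub_le
    (by simpa using (hu.abs_probitFlow_le r x).trans (le_abs_self C))
  have hφC_pos : 0 < φ C := gaussianPDFReal_pos 0 1 C one_ne_zero
  rw [hu.deriv_probitFlow, abs_mul, abs_inv, abs_of_nonneg (gaussianPDFReal_nonneg 0 1 _)]
  gcongr
  exact abs_heatFlow_le hu.Phi_comp.abs_deriv_le r x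

lemma isProbitHeatFlow_probitFlow (hu : IsBoundedC2 u C) :
    IsProbitHeatFlow (probitFlow u) (max C ((φ C)⁻¹ * (1 + C + C * C ^ 2))) where
  continuous :=
    have := hu.contDiff.continuous
    continuous_PhiMean (fun _ => by fun_prop) fun z => by fun_prop
  differentiable r x := (hu.hasDerivAt_probitFlow r x).differentiableAt
  differentiable_deriv r x := (hu.hasDerivAt_deriv_probitFlow r x).differentiableAt
  hasDerivAt_time := hu.hasDerivAt_probitFlow_time
  abs_le r x := le_max_of_le_left (hu.abs_probitFlow_le r x)
  abs_deriv_le r x := le_max_of_le_right (hu.abs_deriv_probitFlow_le r x)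

end IsBoundedC2

end ProbitHeatFlow

section MaximumPrinciple

lemma deriv_deriv_nonneg_of_isLocalMin {f : ℝ → ℝ} {a : ℝ} (hf : ContinuousAt f a)
    (hmin : IsLocalMin f a) : 0 ≤ deriv (deriv f) a := by
  by_contra! hneg
  have hmax : IsLocalMax f a := isLocalMax_of_deriv_deriv_neg hneg hmin.deriv_eq_zero hf
  have hconst : f =ᶠ[𝓝 a] fun _ => f a := by
    filter_upwards [hmin, hmax] with t hge hle using le_antisymm hle hge
  simp [hconst.deriv.deriv_eq] at hneg

lemma nonpos_of_hasDerivAt_of_isMinOn_Icc {f : ℝ → ℝ} {f' a b r : ℝ} (hf : HasDerivAt f f' r)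
    (hmin : IsMinOn f (Icc a b) r) (har : a < r) (hrb : r ≤ b) : f' ≤ 0 := by
  have hdir : a - r ∈ posTangentConeAt (Icc a b) r :=
    sub_mem_posTangentConeAt_of_segment_subset
      ((convex_Icc a b).segment_subset ⟨har.le, hrb⟩ ⟨le_rfl, har.le.trans hrb⟩)
  have hnonneg : 0 ≤ (a - r) * f' := by
    simpa using hmin.localize.hasFDerivWithinAt_nonneg hf.hasFDerivAt.hasFDerivWithinAt hdir
  exact nonpos_of_mul_nonneg_right hnonneg (sub_neg.2 har)

/-- The defect of the three-function inequality between `F`, `G` and `H`, with a penalty in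
space and time that forces a negative minimum to be attained and makes its location strict. -/
def penalizedDefect (F G H : ℝ → ℝ → ℝ) (α β ε η r x y : ℝ) : ℝ :=
  H r (α * x + β * y) - α * F r x - β * G r y + ε * (x ^ 2 + y ^ 2) + η * r

variable {F G H : ℝ → ℝ → ℝ} {C α β ε η r x y : ℝ}

lemma penalizedDefect_swap : penalizedDefect G F H β α ε η r y x =
    penalizedDefect F G H α β ε η r x y := by
  simp only [penalizedDefect, add_comm (β * y), add_comm (y ^ 2)]
  ring

lemma hasDerivAt_penalizedDefect_left (hF : Differentiable ℝ (F r)) (hH : Differentiable ℝ (H r)) :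
    HasDerivAt (fun x => penalizedDefect F G H α β ε η r x y)
      (α * (deriv (H r) (α * x + β * y) - deriv (F r) x) + 2 * (ε * x)) x := by
  have hline : HasDerivAt (fun x => α * x + β * y) α x := by
    simpa using ((hasDerivAt_id x).const_mul α).add_const (β * y)
  have hpenalty := ((hasDerivAt_pow 2 x).add_const (y ^ 2)).const_mul ε
  refine ((((((hH _).hasDerivAt.comp x hline).sub ((hF x).hasDerivAt.const_mul α)).sub_const
    (β * G r y)).add hpenalty).add_const (η * r)).congr_deriv ?_
  norm_num
  ring

lemma hasDerivAt_penalizedDefect_right (hG : Differentiable ℝ (G r)) (hH : Differentiable ℝ (H r)) :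
    HasDerivAt (fun y => penalizedDefect F G H α β ε η r x y)
      (β * (deriv (H r) (α * x + β * y) - deriv (G r) y) + 2 * (ε * y)) y := by
  simp only [← penalizedDefect_swap (F := F) (G := G), add_comm (α * x)]
  exact hasDerivAt_penalizedDefect_left hG hH

lemma hasDerivAt_penalizedDefect_diag (hF : Differentiable ℝ (F r)) (hG : Differentiable ℝ (G r))
    (hH : Differentiable ℝ (H r)) (hαβ : α + β = 1) (t : ℝ) :
    HasDerivAt (fun t => penalizedDefect F G H α β ε η r (x + t) (y + t))
      (deriv (H r) (α * x + β * y + t) - α * deriv (F r) (x + t) - β * deriv (G r) (y + t)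
        + ε * (2 * (x + t) + 2 * (y + t))) t := by
  have hline (t : ℝ) : α * (x + t) + β * (y + t) = α * x + β * y + t := by
    linear_combination t * hαβ
  have hpenalty := ((((hasDerivAt_id t).const_add x).pow 2).add
    (((hasDerivAt_id t).const_add y).pow 2)).const_mul ε
  simp only [penalizedDefect, hline]
  refine ((((((hH _).hasDerivAt.comp_const_add (α * x + β * y) t).sub
    (((hF _).hasDerivAt.comp_const_add x t).const_mul α)).sub
    (((hG _).hasDerivAt.comp_const_add y t).const_mul β)).add hpenalty).add_const
    (η * r)).congr_deriv ?_
  simp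

lemma deriv_deriv_penalizedDefect_diag (hF : IsProbitHeatFlow F C) (hG : IsProbitHeatFlow G C)
    (hH : IsProbitHeatFlow H C) (hαβ : α + β = 1) :
    deriv (deriv fun t => penalizedDefect F G H α β ε η r (x + t) (y + t)) 0 =
      deriv (deriv (H r)) (α * x + β * y) - α * deriv (deriv (F r)) x - β * deriv (deriv (G r)) y
        + 4 * ε := by
  have hshift {V : ℝ → ℝ → ℝ} (hV : IsProbitHeatFlow V C) (a : ℝ) :
      HasDerivAt (fun t => deriv (V r) (a + t)) (deriv (deriv (V r)) a) 0 :=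
    HasDerivAt.comp_const_add a 0 (by simpa using (hV.differentiable_deriv r a).hasDerivAt)
  have hpenalty := ((((hasDerivAt_id (0 : ℝ)).const_add x).const_mul 2).add
    (((hasDerivAt_id 0).const_add y).const_mul 2)).const_mul ε
  have hderiv := funext fun t => (hasDerivAt_penalizedDefect_diag (ε := ε) (η := η) (x := x)
    (y := y) (hF.differentiable r) (hG.differentiable r) (hH.differentiable r) hαβ t).deriv
  rw [hderiv]
  refine ((((hshift hH _).sub ((hshift hF x).const_mul α)).sub
    ((hshift hG y).const_mul β)).add hpenalty).deriv.trans ?_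
  ring

lemma hasDerivAt_penalizedDefect_time (hF : IsProbitHeatFlow F C) (hG : IsProbitHeatFlow G C)
    (hH : IsProbitHeatFlow H C) :
    HasDerivAt (fun r => penalizedDefect F G H α β ε η r x y)
      (r * ((deriv (deriv (H r)) (α * x + β * y) - α * deriv (deriv (F r)) x
        - β * deriv (deriv (G r)) y) -
        (H r (α * x + β * y) * deriv (H r) (α * x + β * y) ^ 2
          - α * (F r x * deriv (F r) x ^ 2) - β * (G r y * deriv (G r) y ^ 2))) + η) r := by
  refine (((((hH.hasDerivAt_time r _).sub ((hF.hasDerivAt_time r x).const_mul α)).sub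
    ((hG.hasDerivAt_time r y).const_mul β)).add_const (ε * (x ^ 2 + y ^ 2))).add
    ((hasDerivAt_id r).const_mul η)).congr_deriv ?_
  ring

-- With `α (p - p₀) = -2 s` and `β (p - p₁) = -2 t`, replacing `p₀`, `p₁` by `p` costs `s` and `t`.
lemma mul_sq_sub_mul_sq_sub_mul_sq_le {v v₀ v₁ p p₀ p₁ s t K : ℝ} (hv₀ : |v₀| ≤ C)
    (hv₁ : |v₁| ≤ C) (hp : |p| ≤ C) (hp₀ : |p₀| ≤ C) (hp₁ : |p₁| ≤ C)
    (hv : v - α * v₀ - β * v₁ ≤ 0) (hs : α * (p - p₀) + 2 * s = 0)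
    (ht : β * (p - p₁) + 2 * t = 0) (hsK : |s| ≤ K) (htK : |t| ≤ K) :
    v * p ^ 2 - α * (v₀ * p₀ ^ 2) - β * (v₁ * p₁ ^ 2) ≤ 8 * C ^ 2 * K := by
  have hcross {w q z : ℝ} (hw : |w| ≤ C) (hz : |z| ≤ K) (hq : |q| ≤ C) :
      -(w * z * (p + q)) ≤ C * K * (C + C) := by
    refine (neg_le_abs _).trans ?_
    have hC := (abs_nonneg _).trans hw
    have hK := (abs_nonneg _).trans hz
    rw [abs_mul, abs_mul]
    gcongr
    exact (abs_add_le p q).trans (add_le_add hp hq)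
  calc v * p ^ 2 - α * (v₀ * p₀ ^ 2) - β * (v₁ * p₁ ^ 2)
      = p ^ 2 * (v - α * v₀ - β * v₁) + 2 * -(v₀ * s * (p + p₀)) + 2 * -(v₁ * t * (p + p₁)) := by
        linear_combination v₀ * (p + p₀) * hs + v₁ * (p + p₁) * ht
    _ ≤ 8 * C ^ 2 * K := by
        have := mul_nonpos_of_nonneg_of_nonpos (sq_nonneg p) hv
        linarith [hcross hv₀ hsK hp₀, hcross hv₁ htK hp₁]

lemma penalty_le_of_penalizedDefect_neg (hF : IsProbitHeatFlow F C) (hG : IsProbitHeatFlow G C)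
    (hH : IsProbitHeatFlow H C) (hα : 0 < α) (hβ : 0 < β) (hαβ : α + β = 1) (hη : 0 ≤ η)
    (hr : 0 ≤ r) (hneg : penalizedDefect F G H α β ε η r x y < 0) :
    ε * (x ^ 2 + y ^ 2) ≤ 2 * C := by
  have hFG : α * F r x + β * G r y ≤ α * C + β * C := by
    gcongr
    exacts [(abs_le.1 (hF.abs_le r x)).2, (abs_le.1 (hG.abs_le r y)).2]
  have hηr := mul_nonneg hη hr
  rw [← add_mul, hαβ] at hFG
  rw [penalizedDefect] at hneg
  linarith [(abs_le.1 (hH.abs_le r (α * x + β * y))).1]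

lemma exists_isMinOn_penalizedDefect (hF : IsProbitHeatFlow F C) (hG : IsProbitHeatFlow G C)
    (hH : IsProbitHeatFlow H C) (hα : 0 < α) (hβ : 0 < β) (hαβ : α + β = 1) (hε : 0 < ε)
    (hη : 0 ≤ η) (hneg : penalizedDefect F G H α β ε η 1 0 0 < 0) :
    ∃ r ∈ Icc (0 : ℝ) 1, ∃ x y, penalizedDefect F G H α β ε η r x y < 0 ∧
      ∀ s ∈ Icc (0 : ℝ) 1, ∀ x' y',
        penalizedDefect F G H α β ε η r x y ≤ penalizedDefect F G H α β ε η s x' y' := by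
  have hcont : Continuous fun q : ℝ × ℝ × ℝ =>
      penalizedDefect F G H α β ε η q.1 q.2.1 q.2.2 := by
    have hHcont : Continuous fun q : ℝ × ℝ × ℝ => H q.1 (α * q.2.1 + β * q.2.2) :=
      hH.continuous.comp (f := fun q : ℝ × ℝ × ℝ => (q.1, α * q.2.1 + β * q.2.2)) (by fun_prop)
    have hFcont : Continuous fun q : ℝ × ℝ × ℝ => F q.1 q.2.1 :=
      hF.continuous.comp (f := fun q : ℝ × ℝ × ℝ => (q.1, q.2.1)) (by fun_prop)
    have hGcont : Continuous fun q : ℝ × ℝ × ℝ => G q.1 q.2.2 :=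
      hG.continuous.comp (f := fun q : ℝ × ℝ × ℝ => (q.1, q.2.2)) (by fun_prop)
    exact (((hHcont.sub (continuous_const.mul hFcont)).sub (continuous_const.mul hGcont)).add
      (by fun_prop)).add (by fun_prop)
  have hbox {s x' y' : ℝ} (hs : s ∈ Icc (0 : ℝ) 1)
      (hlt : penalizedDefect F G H α β ε η s x' y' < 0) :
      (s, x', y') ∈ Icc (0 : ℝ) 1 ×ˢ Icc (-√(2 * C / ε)) (√(2 * C / ε)) ×ˢ
        Icc (-√(2 * C / ε)) (√(2 * C / ε)) := by
    have hle := penalty_le_of_penalizedDefect_neg hF hG hH hα hβ hαβ hη hs.1 hlt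
    rw [mul_comm, ← le_div_iff₀ hε] at hle
    exact ⟨hs, abs_le.1 (abs_le_sqrt (by linarith [sq_nonneg y'])),
      abs_le.1 (abs_le_sqrt (by linarith [sq_nonneg x']))⟩
  have hone : (1 : ℝ) ∈ Icc (0 : ℝ) 1 := right_mem_Icc.2 zero_le_one
  obtain ⟨⟨r, x, y⟩, ⟨hr, -⟩, hmin⟩ := (isCompact_Icc.prod (isCompact_Icc.prod
    isCompact_Icc)).exists_isMinOn ⟨_, hbox hone hneg⟩ hcont.continuousOn
  have hlt : penalizedDefect F G H α β ε η r x y < 0 := (hmin (hbox hone hneg)).trans_lt hneg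
  refine ⟨r, hr, x, y, hlt, fun s hs x' y' => ?_⟩
  by_cases h : penalizedDefect F G H α β ε η s x' y' < 0
  · exact hmin (hbox hs h)
  · exact hlt.le.trans (not_lt.1 h)

lemma le_of_penalizedDefect_min (hF : IsProbitHeatFlow F C) (hG : IsProbitHeatFlow G C)
    (hH : IsProbitHeatFlow H C) (hα : 0 < α) (hβ : 0 < β) (hαβ : α + β = 1) (hε : 0 < ε)
    (hη : 0 ≤ η) (hr₀ : 0 < r) (hr₁ : r ≤ 1) (hneg : penalizedDefect F G H α β ε η r x y < 0)
    (hmin : ∀ s ∈ Icc (0 : ℝ) 1, ∀ x' y',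
      penalizedDefect F G H α β ε η r x y ≤ penalizedDefect F G H α β ε η s x' y') :
    η ≤ r * (4 * ε + 8 * C ^ 2 * √(2 * C * ε)) := by
  have hr : r ∈ Icc (0 : ℝ) 1 := ⟨hr₀.le, hr₁⟩
  have hx := IsLocalMin.hasDerivAt_eq_zero (Eventually.of_forall fun x' => hmin r hr x' y)
    (hasDerivAt_penalizedDefect_left (hF.differentiable r) (hH.differentiable r))
  have hy := IsLocalMin.hasDerivAt_eq_zero (Eventually.of_forall fun y' => hmin r hr x y')
    (hasDerivAt_penalizedDefect_right (hG.differentiable r) (hH.differentiable r))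
  have hdiag := deriv_deriv_nonneg_of_isLocalMin (hasDerivAt_penalizedDefect_diag (ε := ε) (η := η)
    (x := x) (y := y) (hF.differentiable r) (hG.differentiable r) (hH.differentiable r)
    hαβ 0).continuousAt (Eventually.of_forall fun t => by simpa using hmin r hr (x + t) (y + t))
  have htime := nonpos_of_hasDerivAt_of_isMinOn_Icc
    (hasDerivAt_penalizedDefect_time (ε := ε) (η := η) hF hG hH)
    (fun s hs => hmin s hs x y) hr₀ hr₁
  have hpenalty := penalty_le_of_penalizedDefect_neg hF hG hH hα hβ hαβ hη hr₀.le hneg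
  have hdefect : H r (α * x + β * y) - α * F r x - β * G r y ≤ 0 := by
    have : 0 ≤ ε * (x ^ 2 + y ^ 2) + η * r := by positivity
    rw [penalizedDefect] at hneg
    linarith
  have hsmall {z : ℝ} (hz : ε * z ^ 2 ≤ 2 * C) : |ε * z| ≤ √(2 * C * ε) :=
    abs_le_sqrt (by nlinarith)
  have hquad := mul_sq_sub_mul_sq_sub_mul_sq_le (hF.abs_le r x) (hG.abs_le r y)
    (hH.abs_deriv_le r (α * x + β * y)) (hF.abs_deriv_le r x) (hG.abs_deriv_le r y) hdefect hx hy
    (hsmall (by nlinarith)) (hsmall (by nlinarith))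
  rw [deriv_deriv_penalizedDefect_diag hF hG hH hαβ] at hdiag
  nlinarith

theorem IsProbitHeatFlow.three_function_inequality (hF : IsProbitHeatFlow F C)
    (hG : IsProbitHeatFlow G C) (hH : IsProbitHeatFlow H C) (hα : 0 < α) (hβ : 0 < β)
    (hαβ : α + β = 1) (hinit : ∀ x y, α * F 0 x + β * G 0 y ≤ H 0 (α * x + β * y)) :
    α * F 1 0 + β * G 1 0 ≤ H 1 0 := by
  by_contra! hlt
  obtain ⟨η, hη, hneg⟩ : ∃ η > 0, H 1 0 - α * F 1 0 - β * G 1 0 + η < 0 :=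
    ⟨(α * F 1 0 + β * G 1 0 - H 1 0) / 2, by linarith, by linarith⟩
  obtain ⟨ε, hsmall, hε⟩ : ∃ ε, 4 * ε + 8 * C ^ 2 * √(2 * C * ε) < η ∧ 0 < ε := by
    have hlim : ContinuousAt (fun ε => 4 * ε + 8 * C ^ 2 * √(2 * C * ε)) 0 := by fun_prop
    exact (((hlim.eventually_lt continuousAt_const (by simpa using hη)).filter_mono
      nhdsWithin_le_nhds).and (self_mem_nhdsWithin (s := Ioi 0))).exists
  obtain ⟨r, ⟨hr₀, hr₁⟩, x, y, hDneg, hmin⟩ := exists_isMinOn_penalizedDefect (ε := ε) hF hG hH hα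
    hβ hαβ hε hη.le (by simpa [penalizedDefect] using hneg)
  obtain rfl | hr₀ := hr₀.eq_or_lt
  · have : 0 ≤ ε * (x ^ 2 + y ^ 2) := by positivity
    rw [penalizedDefect] at hDneg
    linarith [hinit x y]
  · have hle := le_of_penalizedDefect_min hF hG hH hα hβ hαβ hε hη.le hr₀ hr₁ hDneg hmin
    exact (hle.trans (mul_le_of_le_one_left (by positivity) hr₁)).not_gt hsmall

theorem IsBoundedC2.three_function_inequality {f g h : ℝ → ℝ} {Cf Cg Ch : ℝ}
    (hf : IsBoundedC2 f Cf) (hg : IsBoundedC2 g Cg) (hh : IsBoundedC2 h Ch) (hα : 0 < α)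
    (hβ : 0 < β) (hαβ : α + β = 1) (hfgh : ∀ x y, α * f x + β * g y ≤ h (α * x + β * y)) :
    α * PhiMean γ f + β * PhiMean γ g ≤ PhiMean γ h := by
  have hF := hf.isProbitHeatFlow_probitFlow
  have hG := hg.isProbitHeatFlow_probitFlow
  have hH := hh.isProbitHeatFlow_probitFlow
  have hle := (hF.mono ((le_max_left _ _).trans (le_max_left _ _))).three_function_inequality
    (hG.mono ((le_max_right _ _).trans (le_max_left _ _))) (hH.mono (le_max_right _ _)) hα hβ hαβ
    fun x y => by simpa [probitFlow, PhiMean, PhiInv_Phi] using hfgh x y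
  simpa [probitFlow] using hle

end MaximumPrinciple

section MovingAverage

variable {u : ℝ → ℝ} {C e : ℝ}

/-- The average of `u` over the segment from `x` to `x + e`, used twice as a smoothing operator. -/
noncomputable def movingAverage (e : ℝ) (u : ℝ → ℝ) (x : ℝ) : ℝ := ∫ z in (0 : ℝ)..1, u (x + e * z)

lemma continuous_movingAverage_uncurry (hu : Continuous u) :
    Continuous fun q : ℝ × ℝ => movingAverage q.1 u q.2 := by
  unfold movingAverage
  fun_prop

lemma continuous_movingAverage (hu : Continuous u) (e : ℝ) : Continuous (movingAverage e u) := by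
  unfold movingAverage
  fun_prop

lemma abs_movingAverage_le (hC : ∀ x, |u x| ≤ C) (e x : ℝ) : |movingAverage e u x| ≤ C := by
  simpa [movingAverage] using intervalIntegral.norm_integral_le_of_norm_le_const
    (a := 0) (b := 1) (f := fun z => u (x + e * z)) fun z _ => hC _

lemma hasDerivAt_movingAverage (hu : Continuous u) (he : e ≠ 0) (x : ℝ) :
    HasDerivAt (movingAverage e u) (e⁻¹ * (u (x + e) - u x)) x := by
  have hprim (y : ℝ) : HasDerivAt (fun y => ∫ z in (0 : ℝ)..y, u z) (u y) y :=
    (hu.integral_hasStrictDerivAt 0 y).hasDerivAt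
  have heq (y : ℝ) : movingAverage e u y =
      e⁻¹ * ((∫ z in (0 : ℝ)..(y + e), u z) - ∫ z in (0 : ℝ)..y, u z) := by
    rw [movingAverage, intervalIntegral.integral_comp_add_mul _ he,
      intervalIntegral.integral_interval_sub_left (hu.intervalIntegrable _ _)
        (hu.intervalIntegrable _ _)]
    simp
  rw [funext heq]
  exact (((hprim (x + e)).comp_add_const x e).sub (hprim x)).const_mul _

lemma deriv_movingAverage (hu : Continuous u) (he : e ≠ 0) :
    deriv (movingAverage e u) = fun x => e⁻¹ * (u (x + e) - u x) :=
  funext fun x => (hasDerivAt_movingAverage hu he x).deriv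

lemma isBoundedC2_movingAverage_movingAverage (hu : Continuous u) (hC : ∀ x, |u x| ≤ C)
    (he : e ≠ 0) : ∃ C', IsBoundedC2 (movingAverage e (movingAverage e u)) C' := by
  have hbound {w : ℝ → ℝ} {K : ℝ} (hw : ∀ x, |w x| ≤ K) (x : ℝ) :
      |e⁻¹ * (w (x + e) - w x)| ≤ |e⁻¹| * (K + K) := by
    rw [abs_mul]
    gcongr
    exact (abs_sub _ _).trans (add_le_add (hw _) (hw _))
  have hcont := continuous_movingAverage hu e
  have hderiv := deriv_movingAverage hcont he
  have hderiv₂ : deriv (deriv (movingAverage e (movingAverage e u))) = fun x =>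
      e⁻¹ * (e⁻¹ * (u (x + e + e) - u (x + e)) - e⁻¹ * (u (x + e) - u x)) := by
    rw [hderiv]
    exact funext fun x => ((((hasDerivAt_movingAverage hu he (x + e)).comp_add_const x e).sub
      (hasDerivAt_movingAverage hu he x)).const_mul _).deriv
  have hdiff : Differentiable ℝ (movingAverage e u) :=
    fun x => (hasDerivAt_movingAverage hu he x).differentiableAt
  refine ⟨max C (max (|e⁻¹| * (C + C)) (|e⁻¹| * (|e⁻¹| * (C + C) + |e⁻¹| * (C + C)))), ?_,
    fun x => le_max_of_le_left (abs_movingAverage_le (abs_movingAverage_le hC e) e x),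
    fun x => le_max_of_le_right (le_max_of_le_left ?_),
    fun x => le_max_of_le_right (le_max_of_le_right ?_)⟩
  · refine contDiff_succ_iff_deriv (n := 1).2 ⟨fun x =>
      (hasDerivAt_movingAverage hcont he x).differentiableAt, by simp,
      contDiff_one_iff_deriv.2 ⟨?_, ?_⟩⟩
    · rw [hderiv]
      fun_prop
    · rw [hderiv₂]
      fun_prop
  · rw [hderiv]
    exact hbound (abs_movingAverage_le hC e) x
  · rw [hderiv₂]
    exact hbound (w := fun x => e⁻¹ * (u (x + e) - u x)) (hbound hC) x

lemma tendsto_movingAverage_movingAverage (hu : Continuous u) (x : ℝ) :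
    Tendsto (fun e => movingAverage e (movingAverage e u) x) (𝓝 0) (𝓝 (u x)) := by
  have hcont : Continuous fun e => ∫ z in (0 : ℝ)..1, movingAverage e u (x + e * z) :=
    intervalIntegral.continuous_parametric_intervalIntegral_of_continuous'
      (f := fun e z => movingAverage e u (x + e * z)) ((continuous_movingAverage_uncurry hu).comp
        (f := fun p : ℝ × ℝ => (p.1, x + p.1 * p.2)) (by fun_prop)) 0 1
  simpa [movingAverage] using hcont.tendsto 0

lemma movingAverage_three_function_inequality {f g h : ℝ → ℝ} {α β : ℝ} (hf : Continuous f)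
    (hg : Continuous g) (hh : Continuous h) (hαβ : α + β = 1)
    (hfgh : ∀ x y, α * f x + β * g y ≤ h (α * x + β * y)) (e x y : ℝ) :
    α * movingAverage e f x + β * movingAverage e g y ≤ movingAverage e h (α * x + β * y) := by
  have hint {w : ℝ → ℝ} (hw : Continuous w) (a : ℝ) :
      IntervalIntegrable (fun z => w (a + e * z)) volume 0 1 :=
    (hw.comp (by fun_prop)).intervalIntegrable 0 1
  simp only [movingAverage, ← intervalIntegral.integral_const_mul]
  rw [← intervalIntegral.integral_add ((hint hf x).const_mul α) ((hint hg y).const_mul β)]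
  refine intervalIntegral.integral_mono_on zero_le_one
    (((hint hf x).const_mul α).add ((hint hg y).const_mul β)) (hint hh _) fun z _ =>
      (hfgh _ _).trans_eq (congrArg h ?_)
  linear_combination e * z * hαβ

end MovingAverage

section Ehrhard

/-- The functional form of Ehrhard's inequality for `μ`. -/
def SatisfiesEhrhard {E : Type*} [TopologicalSpace E] [AddCommGroup E] [Module ℝ E]
    [MeasurableSpace E] (μ : Measure E) : Prop :=
  ∀ ⦃α β : ℝ⦄, 0 < α → 0 < β → α + β = 1 → ∀ f g h : E →ᵇ ℝ,
    (∀ x y, α * f x + β * g y ≤ h (α • x + β • y)) →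
      α * PhiMean μ f + β * PhiMean μ g ≤ PhiMean μ h

theorem satisfiesEhrhard_gaussianReal : SatisfiesEhrhard γ := by
  intro α β hα hβ hαβ f g h hfgh
  have hC2 (u : ℝ →ᵇ ℝ) {e : ℝ} (he : e ≠ 0) :=
    isBoundedC2_movingAverage_movingAverage u.continuous u.norm_coe_le_norm he
  have hcont (u : ℝ →ᵇ ℝ) (e : ℝ) := continuous_movingAverage u.continuous e
  have hlim (u : ℝ →ᵇ ℝ) : Tendsto (fun e => PhiMean γ (movingAverage e (movingAverage e u)))
      (𝓝[≠] 0) (𝓝 (PhiMean γ u)) :=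
    tendsto_PhiMean (fun e => (continuous_movingAverage (hcont u e) e).aestronglyMeasurable)
      u.continuous.aestronglyMeasurable
      fun z => (tendsto_movingAverage_movingAverage u.continuous z).mono_left nhdsWithin_le_nhds
  refine le_of_tendsto_of_tendsto (((hlim f).const_mul α).add ((hlim g).const_mul β)) (hlim h) ?_
  filter_upwards [self_mem_nhdsWithin] with e he
  obtain ⟨_, hf⟩ := hC2 f he
  obtain ⟨_, hg⟩ := hC2 g he
  obtain ⟨_, hh⟩ := hC2 h he
  exact hf.three_function_inequality hg hh hα hβ hαβ
    (movingAverage_three_function_inequality (hcont f e) (hcont g e) (hcont h e) hαβ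
      (movingAverage_three_function_inequality f.continuous g.continuous h.continuous hαβ hfgh e) e)

end Ehrhard

section Tensorization

universe u

lemma PhiMean_prod {Ω₁ Ω₂ : Type*} [MeasurableSpace Ω₁] [MeasurableSpace Ω₂] {μ : Measure Ω₁}
    {ν : Measure Ω₂} [IsProbabilityMeasure μ] [IsProbabilityMeasure ν] {w : Ω₁ × Ω₂ → ℝ}
    (hw : StronglyMeasurable w) :
    PhiMean (μ.prod ν) w = PhiMean ν fun y => PhiMean μ fun x => w (x, y) := by
  have hsection (y : Ω₂) : AEStronglyMeasurable (fun x => w (x, y)) μ :=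
    (hw.comp_measurable measurable_prodMk_right).aestronglyMeasurable
  rw [PhiMean, integral_prod_symm _ (integrable_Phi_comp hw.aestronglyMeasurable)]
  exact congrArg PhiInv (integral_congr_ae (ae_of_all _ fun y => (Phi_PhiMean (hsection y)).symm))

variable {E F : Type*} [NormedAddCommGroup E] [NormedSpace ℝ E] [MeasurableSpace E]
  [NormedAddCommGroup F] [NormedSpace ℝ F] [MeasurableSpace F] [BorelSpace F]
  {μ : Measure E} {ν : Measure F}

lemma SatisfiesEhrhard.of_measurePreserving (hμ : SatisfiesEhrhard μ) (L : E →L[ℝ] F)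
    (hL : MeasurePreserving L μ ν) : SatisfiesEhrhard ν := by
  have hmean (w : F →ᵇ ℝ) : PhiMean ν w = PhiMean μ (w.compContinuous L) := by
    rw [PhiMean, ← hL.map_eq]
    exact congrArg PhiInv (integral_map hL.aemeasurable
      (continuous_Phi.comp w.continuous).aestronglyMeasurable)
  intro α β hα hβ hαβ f g h hfgh
  simp only [hmean]
  exact hμ hα hβ hαβ _ _ _ fun x y => by simpa using hfgh (L x) (L y)

lemma satisfiesEhrhard_of_subsingleton [Subsingleton E] [IsProbabilityMeasure μ] :
    SatisfiesEhrhard μ := by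
  have hmean (w : E → ℝ) : PhiMean μ w = w 0 := by
    have hw (z : E) : w z = w 0 := congrArg w (Subsingleton.elim z 0)
    simp [PhiMean, hw, PhiInv_Phi]
  intro α β _ _ _ f g h hfgh
  simpa [hmean] using hfgh 0 0

theorem SatisfiesEhrhard.prod [BorelSpace E] [SecondCountableTopology E] [SecondCountableTopology F]
    [IsProbabilityMeasure μ] [IsProbabilityMeasure ν] (hμ : SatisfiesEhrhard μ)
    (hν : SatisfiesEhrhard ν) : SatisfiesEhrhard (μ.prod ν) := by
  intro α β hα hβ hαβ f g h hfgh
  have hcont (w : E × F →ᵇ ℝ) (y : F) : Continuous fun x => w (x, y) := by fun_prop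
  let slice (w : E × F →ᵇ ℝ) (y : F) : E →ᵇ ℝ :=
    .ofNormedAddCommGroup (fun x => w (x, y)) (hcont w y) ‖w‖ fun _ => w.norm_coe_le_norm _
  let partialMean (w : E × F →ᵇ ℝ) : F →ᵇ ℝ :=
    .ofNormedAddCommGroup (fun y => PhiMean μ (slice w y))
      (continuous_PhiMean (fun y => (hcont w y).aestronglyMeasurable)
        fun x => w.continuous.comp (by fun_prop)) ‖w‖
      fun y => abs_PhiMean_le (hcont w y).aestronglyMeasurable fun _ => w.norm_coe_le_norm _
  have hmean (w : E × F →ᵇ ℝ) : PhiMean (μ.prod ν) w = PhiMean ν (partialMean w) :=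
    PhiMean_prod w.continuous.stronglyMeasurable
  simp only [hmean]
  exact hν hα hβ hαβ _ _ _ fun y y' =>
    hμ hα hβ hαβ (slice f y) (slice g y') (slice h (α • y + β • y'))
      fun x x' => hfgh (x, y) (x', y')

private lemma SatisfiesEhrhard.pi_fin {n : ℕ} {E : Fin n → Type u}
    [∀ i, NormedAddCommGroup (E i)] [∀ i, NormedSpace ℝ (E i)] [∀ i, MeasurableSpace (E i)]
    [∀ i, BorelSpace (E i)] [∀ i, SecondCountableTopology (E i)] {μ : ∀ i, Measure (E i)}
    [∀ i, IsProbabilityMeasure (μ i)] (hμ : ∀ i, SatisfiesEhrhard (μ i)) :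
    SatisfiesEhrhard (Measure.pi μ) := by
  induction n with
  | zero => exact satisfiesEhrhard_of_subsingleton
  | succ n ih =>
    have hcons : ⇑(MeasurableEquiv.piFinSuccAbove E 0).symm = Fin.consEquivL ℝ E :=
      congrArg DFunLike.coe (Fin.insertNthEquiv_zero E)
    exact ((hμ 0).prod (ih fun i => hμ i.succ)).of_measurePreserving
      (Fin.consEquivL ℝ E : _ →L[ℝ] _) (hcons ▸ (measurePreserving_piFinSuccAbove μ 0).symm)

theorem SatisfiesEhrhard.pi {ι : Type*} [Fintype ι] {E : ι → Type u}
    [∀ i, NormedAddCommGroup (E i)] [∀ i, NormedSpace ℝ (E i)] [∀ i, MeasurableSpace (E i)]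
    [∀ i, BorelSpace (E i)] [∀ i, SecondCountableTopology (E i)] {μ : ∀ i, Measure (E i)}
    [∀ i, IsProbabilityMeasure (μ i)] (hμ : ∀ i, SatisfiesEhrhard (μ i)) :
    SatisfiesEhrhard (Measure.pi μ) :=
  let e := (Fintype.equivFin ι).symm
  (SatisfiesEhrhard.pi_fin fun j => hμ (e j)).of_measurePreserving
    (ContinuousLinearEquiv.piCongrLeft ℝ E e : _ →L[ℝ] _) (measurePreserving_piCongrLeft μ e)

end Tensorization

section ClosedSets

open Metric
open scoped Pointwise

lemma toReal_mem_Ioo_zero_one {p : ENNReal} (hp : 0 < p ∧ p < 1) : p.toReal ∈ Ioo 0 1 :=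
  ⟨ENNReal.toReal_pos hp.1.ne' hp.2.ne_top,
    ENNReal.toReal_lt_of_lt_ofReal (by simpa only [ENNReal.ofReal_one] using hp.2)⟩

variable {X : Type*} [PseudoMetricSpace X]

/-- As `n → ∞`, `cutoff S κ n` tends to `∞` on the closed set `S` and to `-∞` off `S`, so that its
image under `Φ` approximates the indicator of `S`. The depth `κ` leaves room for the cutoffs of
`A`, `B` and `α • A + β • B` to satisfy the hypothesis of Ehrhard's inequality. -/
noncomputable def cutoff (S : Set X) (κ : ℝ) (n : ℕ) : X →ᵇ ℝ :=
  .ofNormedAddCommGroup (fun z => n * max (-κ) (1 - n * infDist z S))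
    (by have := continuous_infDist_pt S; fun_prop) (n * max |κ| 1) fun z => by
      have hnonneg : 0 ≤ n * infDist z S := mul_nonneg n.cast_nonneg infDist_nonneg
      rw [norm_mul, Real.norm_natCast, Real.norm_eq_abs]
      gcongr
      refine abs_le.2 ⟨?_, max_le_max (neg_le_abs κ) (by linarith)⟩
      exact (neg_le_neg ((le_abs_self κ).trans (le_max_left _ _))).trans (le_max_left _ _)

lemma tendsto_Phi_cutoff {S : Set X} (hS : IsClosed S) (hne : S.Nonempty) {κ : ℝ} (hκ : 0 < κ)
    (z : X) : Tendsto (fun n => Phi (cutoff S κ n z)) atTop (𝓝 (S.indicator 1 z)) := by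
  have hcast : Tendsto (fun n : ℕ => (n : ℝ)) atTop atTop := tendsto_natCast_atTop_atTop
  by_cases hz : z ∈ S
  · have hcutoff (n : ℕ) : cutoff S κ n z = n := by
      simp [cutoff, infDist_zero_of_mem hz, max_eq_right (show -κ ≤ 1 by linarith)]
    simpa [hz, hcutoff, Function.comp_def] using tendsto_Phi_atTop.comp hcast
  · have hdist : 0 < infDist z S := (hS.notMem_iff_infDist_pos hne).1 hz
    have hcutoff : ∀ᶠ n in atTop, n * -κ = cutoff S κ n z := by
      filter_upwards [(hcast.atTop_mul_const hdist).eventually_ge_atTop (1 + κ)] with n hn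
      simp only [cutoff, BoundedContinuousFunction.coe_ofNormedAddCommGroup]
      rw [max_eq_left (by linarith)]
    have hbot := (hcast.atTop_mul_const_of_neg (neg_lt_zero.2 hκ)).congr' hcutoff
    simpa [hz, Function.comp_def] using tendsto_Phi_atBot.comp hbot

lemma tendsto_integral_Phi_cutoff [MeasurableSpace X] [BorelSpace X] {μ : Measure X}
    [IsProbabilityMeasure μ] {S : Set X} (hS : IsClosed S) (hne : S.Nonempty) {κ : ℝ}
    (hκ : 0 < κ) :
    Tendsto (fun n => ∫ z, Phi (cutoff S κ n z) ∂μ) atTop (𝓝 (μ.real S)) := by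
  rw [← integral_indicator_one hS.measurableSet]
  exact tendsto_integral_Phi_comp (fun n => (cutoff S κ n).continuous.aestronglyMeasurable)
    (tendsto_Phi_cutoff hS hne hκ)

variable {E : Type*} [NormedAddCommGroup E] [NormedSpace ℝ E]

lemma infDist_smul_add_smul_le {A B C : Set E} {α β : ℝ} (hα : 0 ≤ α) (hβ : 0 ≤ β)
    (hA : A.Nonempty) (hB : B.Nonempty) (hABC : α • A + β • B ⊆ C) (x y : E) :
    infDist (α • x + β • y) C ≤ α * infDist x A + β * infDist y B := by
  have := hA.to_subtype
  have := hB.to_subtype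
  rw [infDist_eq_iInf (x := x), infDist_eq_iInf (x := y), Real.mul_iInf_of_nonneg hα,
    Real.mul_iInf_of_nonneg hβ]
  refine le_ciInf_add_ciInf fun a b => ?_
  have hmem : α • (a : E) + β • (b : E) ∈ C :=
    hABC (add_mem_add (smul_mem_smul_set a.2) (smul_mem_smul_set b.2))
  calc infDist (α • x + β • y) C
      ≤ dist (α • x + β • y) (α • (a : E) + β • (b : E)) := infDist_le_dist_of_mem hmem
    _ ≤ dist (α • x) (α • (a : E)) + dist (β • y) (β • (b : E)) := dist_add_add_le _ _ _ _
    _ = α * dist x a + β * dist y b := by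
      rw [dist_smul₀, dist_smul₀, Real.norm_of_nonneg hα, Real.norm_of_nonneg hβ]

lemma cutoff_three_function_inequality {A B C : Set E} {α β κ : ℝ} (hα : 0 ≤ α) (hβ : 0 ≤ β)
    (hαβ : α + β = 1) (hακ : 2 ≤ α * κ) (hβκ : 2 ≤ β * κ) (hA : A.Nonempty) (hB : B.Nonempty)
    (hABC : α • A + β • B ⊆ C) (n : ℕ) (x y : E) :
    α * cutoff A κ n x + β * cutoff B κ n y ≤ cutoff C 1 n (α • x + β • y) := by
  suffices α * max (-κ) (1 - n * infDist x A) + β * max (-κ) (1 - n * infDist y B) ≤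
      max (-1) (1 - n * infDist (α • x + β • y) C) by
    refine Eq.trans_le ?_ (mul_le_mul_of_nonneg_left this n.cast_nonneg)
    simp only [cutoff, BoundedContinuousFunction.coe_ofNormedAddCommGroup]
    ring
  have hκ : 0 ≤ κ := by linarith [congrArg (· * κ) hαβ]
  have hle_one (S : Set E) (z : E) : max (-κ) (1 - n * infDist z S) ≤ 1 :=
    max_le (by linarith) (sub_le_self _ (mul_nonneg n.cast_nonneg infDist_nonneg))
  have hxα := mul_le_mul_of_nonneg_left (hle_one A x) hα
  have hyβ := mul_le_mul_of_nonneg_left (hle_one B y) hβ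
  rcases max_choice (-κ) (1 - n * infDist x A) with hx | hx
  · exact le_max_of_le_left (by rw [hx]; linarith)
  rcases max_choice (-κ) (1 - n * infDist y B) with hy | hy
  · exact le_max_of_le_left (by rw [hy]; linarith)
  refine le_max_of_le_right ?_
  have hdist := mul_le_mul_of_nonneg_left (infDist_smul_add_smul_le hα hβ hA hB hABC x y)
    n.cast_nonneg
  rw [hx, hy]
  linarith

variable [MeasurableSpace E] [BorelSpace E] {μ : Measure E} [IsProbabilityMeasure μ]

theorem SatisfiesEhrhard.le_measureReal_of_isClosed (hμ : SatisfiesEhrhard μ) {α β : ℝ}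
    (hα : 0 < α) (hβ : 0 < β) (hαβ : α + β = 1) {A B C : Set E} (hA : IsClosed A)
    (hB : IsClosed B) (hC : IsClosed C) (hABC : α • A + β • B ⊆ C) (hμA : μ.real A ∈ Ioo 0 1)
    (hμB : μ.real B ∈ Ioo 0 1) :
    Phi (α * PhiInv (μ.real A) + β * PhiInv (μ.real B)) ≤ μ.real C := by
  have hneA : A.Nonempty := nonempty_of_measureReal_ne_zero hμA.1.ne'
  have hneB : B.Nonempty := nonempty_of_measureReal_ne_zero hμB.1.ne'
  have hneC : C.Nonempty := (hneA.smul_set.add hneB.smul_set).mono hABC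
  obtain ⟨κ, hακ, hβκ⟩ : ∃ κ, 2 ≤ α * κ ∧ 2 ≤ β * κ :=
    ⟨2 / min α β, by
      have hmin : 0 < min α β := lt_min hα hβ
      constructor <;> rw [mul_div_assoc', le_div_iff₀ hmin, mul_comm] <;> gcongr <;> simp⟩
  have hκ : 0 < κ := pos_of_mul_pos_right (two_pos.trans_le hακ) hα.le
  have hlim {S : Set E} (hS : IsClosed S) (hne : S.Nonempty) (hμS : μ.real S ∈ Ioo 0 1) :
      Tendsto (fun n => PhiMean μ (cutoff S κ n)) atTop (𝓝 (PhiInv (μ.real S))) :=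
    (continuousAt_PhiInv hμS).tendsto.comp (tendsto_integral_Phi_cutoff hS hne hκ)
  refine le_of_tendsto_of_tendsto' ((continuous_Phi.tendsto _).comp
    (((hlim hA hneA hμA).const_mul α).add ((hlim hB hneB hμB).const_mul β)))
    (tendsto_integral_Phi_cutoff hC hneC one_pos) fun n => ?_
  rw [← Phi_PhiMean (cutoff C 1 n).continuous.aestronglyMeasurable]
  exact strictMono_Phi.monotone (hμ hα hβ hαβ _ _ _
    (cutoff_three_function_inequality hα.le hβ.le hαβ hακ hβκ hneA hneB hABC n))

theorem SatisfiesEhrhard.concaveOn_PhiInv_measure_sublevel (hμ : SatisfiesEhrhard μ) {F : E → ℝ}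
    (hF : ConvexOn ℝ univ F) (hcont : Continuous F) :
    ConcaveOn ℝ {t | 0 < μ {x | F x ≤ t} ∧ μ {x | F x ≤ t} < 1}
      fun t => PhiInv (μ {x | F x ≤ t}).toReal := by
  have hmono : Monotone fun t => μ {x | F x ≤ t} := fun s t hst =>
    measure_mono fun x hx => le_trans hx hst
  have hclosed (t : ℝ) : IsClosed {x | F x ≤ t} := isClosed_le hcont continuous_const
  have hconvex : Convex ℝ {t | 0 < μ {x | F x ≤ t} ∧ μ {x | F x ≤ t} < 1} :=
    (ordConnected_Ioo.preimage_mono hmono).convex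
  refine concaveOn_iff_forall_pos.2 ⟨hconvex, fun s hs t ht α β hα hβ hαβ => ?_⟩
  have hABC : α • {x | F x ≤ s} + β • {x | F x ≤ t} ⊆ {x | F x ≤ α • s + β • t} := by
    rintro _ ⟨_, ⟨x, hx, rfl⟩, _, ⟨y, hy, rfl⟩, rfl⟩
    exact (hF.2 trivial trivial hα.le hβ.le hαβ).trans
      (add_le_add (smul_le_smul_of_nonneg_left hx hα.le) (smul_le_smul_of_nonneg_left hy hβ.le))
  rw [← strictMono_Phi.le_iff_le,
    Phi_PhiInv (toReal_mem_Ioo_zero_one (hconvex hs ht hα.le hβ.le hαβ))]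
  exact hμ.le_measureReal_of_isClosed hα hβ hαβ (hclosed s) (hclosed t) (hclosed _) hABC
    (toReal_mem_Ioo_zero_one hs) (toReal_mem_Ioo_zero_one ht)

end ClosedSets

section ChiSquare

lemma convexOn_comp_of_monotoneOn {V W : Type*} [AddCommGroup V] [Module ℝ V] [AddCommGroup W]
    [PartialOrder W] [Module ℝ W] {s : Set V} {t : Set W} {f : W → ℝ} {q : V → W}
    (hf : ConvexOn ℝ t f) (hmono : MonotoneOn f t) (hq : ConvexOn ℝ s q) (hst : MapsTo q s t) :
    ConvexOn ℝ s (f ∘ q) :=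
  ⟨hq.1, fun _ hx _ hy _ _ ha hb hab =>
    (hmono (hst (hq.1 hx hy ha hb hab)) (hf.1 (hst hx) (hst hy) ha hb hab)
      (hq.2 hx hy ha hb hab)).trans (hf.2 (hst hx) (hst hy) ha hb hab)⟩

/-- The sums of squares of the blocks of `z`, which for a standard Gaussian `z` are independent
chi-square variables. -/
def blockSumSq {ι : Type*} {κ : ι → Type*} [∀ j, Fintype (κ j)] (z : ∀ j, κ j → ℝ) : ι → ℝ :=
  fun j => ∑ i, z j i ^ 2

lemma blockSumSq_nonneg {ι : Type*} {κ : ι → Type*} [∀ j, Fintype (κ j)] (z : ∀ j, κ j → ℝ) :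
    0 ≤ blockSumSq z :=
  fun _ => Finset.sum_nonneg fun _ _ => sq_nonneg _

lemma convexOn_blockSumSq {ι : Type*} {κ : ι → Type*} [∀ j, Fintype (κ j)] :
    ConvexOn ℝ univ (blockSumSq (κ := κ)) := by
  refine ⟨convex_univ, fun x _ y _ a b ha hb hab j => ?_⟩
  simp only [blockSumSq, Pi.add_apply, Pi.smul_apply, Finset.smul_sum, ← Finset.sum_add_distrib]
  exact Finset.sum_le_sum fun i _ => even_two.convexOn_pow.2 trivial trivial ha hb hab

variable {ι : Type*} {f : (ι → ℝ) → ℝ}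

lemma convexOn_comp_blockSumSq {κ : ι → Type*} [∀ j, Fintype (κ j)]
    (hconv : ConvexOn ℝ (Ici 0) f) (hmono : MonotoneOn f (Ici 0)) :
    ConvexOn ℝ univ (f ∘ blockSumSq (κ := κ)) :=
  convexOn_comp_of_monotoneOn hconv hmono convexOn_blockSumSq fun z _ => blockSumSq_nonneg z

lemma continuous_comp_blockSumSq [Finite ι] {κ : ι → Type*} [∀ j, Fintype (κ j)]
    (hconv : ConvexOn ℝ (Ici 0) f) (hmono : MonotoneOn f (Ici 0)) :
    Continuous (f ∘ blockSumSq (κ := κ)) := by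
  have := Fintype.ofFinite ι
  exact (convexOn_comp_blockSumSq hconv hmono).locallyLipschitz.continuous

/-- Monotonicity rules out the jumps at the boundary that a convex function may have. -/
lemma continuousOn_Ici_of_convexOn_of_monotoneOn [Finite ι] (hconv : ConvexOn ℝ (Ici 0) f)
    (hmono : MonotoneOn f (Ici 0)) : ContinuousOn f (Ici 0) := by
  have hsqrt : Continuous fun x : ι → ℝ => f (blockSumSq fun j (_ : Unit) => √(x j)) :=
    (continuous_comp_blockSumSq hconv hmono).comp (by fun_prop)
  refine hsqrt.continuousOn.congr fun x hx => congrArg f (funext fun j => ?_)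
  simp [blockSumSq, Real.sq_sqrt (hx j)]

lemma measurable_sum_sq (k : ℕ) : Measurable fun x : Fin k → ℝ => ∑ i, x i ^ 2 := by fun_prop

instance isProbabilityMeasure_chiSq (k : ℕ) : IsProbabilityMeasure (chiSq k) :=
  Measure.isProbabilityMeasure_map (measurable_sum_sq k).aemeasurable

variable [Fintype ι]

lemma measurePreserving_blockSumSq (k : ι → ℕ) :
    MeasurePreserving blockSumSq (Measure.pi fun j => Measure.pi fun _ : Fin (k j) => γ)
      (Measure.pi fun j => chiSq (k j)) :=
  measurePreserving_pi _ _ fun j => ⟨measurable_sum_sq (k j), rfl⟩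

lemma ae_nonneg_pi_chiSq (k : ι → ℕ) : ∀ᵐ x ∂Measure.pi fun j => chiSq (k j), 0 ≤ x := by
  rw [← (measurePreserving_blockSumSq k).map_eq,
    ae_map_iff (measurePreserving_blockSumSq k).aemeasurable measurableSet_Ici]
  exact ae_of_all _ blockSumSq_nonneg

lemma pi_chiSq_sublevel (k : ι → ℕ) (hcont : ContinuousOn f (Ici 0)) (t : ℝ) :
    (Measure.pi fun j => chiSq (k j)) {x | f x ≤ t} =
      (Measure.pi fun j => Measure.pi fun _ : Fin (k j) => γ) {z | f (blockSumSq z) ≤ t} := by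
  have hf : AEMeasurable f (Measure.pi fun j => chiSq (k j)) :=
    Measure.restrict_eq_self_of_ae_mem (ae_nonneg_pi_chiSq k) ▸ hcont.aemeasurable measurableSet_Ici
  exact ((measurePreserving_blockSumSq k).measure_preimage
    (nullMeasurableSet_le hf aemeasurable_const)).symm

end ChiSquare

theorem stmt12_general {ι : Type*} [Fintype ι] (k : ι → ℕ) {f : (ι → ℝ) → ℝ}
    (hconv : ConvexOn ℝ (Ici 0) f) (hmono : MonotoneOn f (Ici 0)) :
    ConcaveOn ℝ
      {t : ℝ | 0 < (Measure.pi fun j => chiSq (k j)) {x | f x ≤ t} ∧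
        (Measure.pi fun j => chiSq (k j)) {x | f x ≤ t} < 1}
      (fun t => PhiInv ((Measure.pi fun j => chiSq (k j)) {x | f x ≤ t}).toReal) := by
  have hGauss : SatisfiesEhrhard (Measure.pi fun j => Measure.pi fun _ : Fin (k j) => γ) :=
    .pi fun _ => .pi fun _ => satisfiesEhrhard_gaussianReal
  simp only [pi_chiSq_sublevel k (continuousOn_Ici_of_convexOn_of_monotoneOn hconv hmono)]
  exact hGauss.concaveOn_PhiInv_measure_sublevel
    (convexOn_comp_blockSumSq hconv hmono) (continuous_comp_blockSumSq hconv hmono)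

/-- Let `k ≥ 2` and let `W = (w₁, …, wₙ)` have independent `χ²(k)` coordinates. For any
coordinatewise non-decreasing convex `f : ℝ₊ⁿ → ℝ`, the map `t ↦ Φ⁻¹(P(f(W) ≤ t))` is
concave on the set where it is defined (where the probability is strictly between 0 and 1). -/
theorem stmt12 (k n : ℕ) (hk : 2 ≤ k) (f : (Fin n → ℝ) → ℝ)
    (hconv : ConvexOn ℝ {x : Fin n → ℝ | ∀ i, 0 ≤ x i} f)
    (hmono : ∀ x y : Fin n → ℝ, (∀ i, 0 ≤ x i) → (∀ i, x i ≤ y i) → f x ≤ f y) :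
    ConcaveOn ℝ
      {t : ℝ | 0 < (Measure.pi fun _ : Fin n => chiSq k) {x | f x ≤ t} ∧
        (Measure.pi fun _ : Fin n => chiSq k) {x | f x ≤ t} < 1}
      (fun t => PhiInv (((Measure.pi fun _ : Fin n => chiSq k) {x | f x ≤ t}).toReal)) :=
  stmt12_general (fun _ => k) hconv fun x hx y _ hxy => hmono x y hx hxy
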